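/- (Strict Jensen equality forces eigenstates) Let H be a complex Hilbert space, let T : H → H be a bounded self-adjoint operator, let ψ ∈ H with ‖ψ‖ = 1, and let Φ : ℝ → ℝ be strictly convex and continuous. If Φ(Re⟨ψ, Tψ⟩) = Re⟨ψ, Φ(T)ψ⟩, where Φ(T) denotes the continuous functional calculus, then ψ is an eigenvector of T: Tψ = (Re⟨ψ, Tψ⟩)·ψ. -/

import Mathlib

/-!
Let `m = ⟨ψ, Tψ⟩`. Subtracting from `Φ` a supporting line at `m` gives a function `g` that is
positive away from `m`, and equality in Jensen's inequality says `⟨ψ, g(T)ψ⟩ = 0`. On the compact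
spectrum every nonnegative continuous `f` vanishing at `m` satisfies `f ≤ ε + C g` for each `ε > 0`
and a suitable `C`, so `⟨ψ, f(T)ψ⟩ = 0` as well. For `f x = (x - m) ^ 2` this reads
`‖Tψ - mψ‖ ^ 2 = 0`. The argument uses only that `A ↦ ⟨ψ, Aψ⟩` is positive and normalised.
-/

section Convex

variable {s : Set ℝ} {Φ : ℝ → ℝ} {m : ℝ}

lemma exists_mul_sub_le_of_convexOn (hΦ : ConvexOn ℝ s Φ) (hm : m ∈ interior s) :
    ∃ c : ℝ, ∀ x ∈ s, c * (x - m) ≤ Φ x - Φ m := by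
  refine ⟨derivWithin Φ (Set.Ioi m) m, fun x hx ↦ ?_⟩
  rcases lt_trichotomy x m with hxm | rfl | hmx
  · have hslope := (hΦ.slope_le_leftDeriv_of_mem_interior hx hm hxm).trans
      (hΦ.leftDeriv_le_rightDeriv_of_mem_interior hm)
    rw [slope_def_field, div_le_iff₀ (sub_pos.2 hxm)] at hslope
    linarith
  · simp
  · have hslope := hΦ.rightDeriv_le_slope_of_mem_interior hm hx hmx
    rwa [slope_def_field, le_div_iff₀ (sub_pos.2 hmx)] at hslope

lemma exists_mul_sub_lt_of_strictConvexOn (hΦ : StrictConvexOn ℝ s Φ) (hm : m ∈ interior s) :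
    ∃ c : ℝ, ∀ x ∈ s, x ≠ m → c * (x - m) < Φ x - Φ m := by
  obtain ⟨c, hc⟩ := exists_mul_sub_le_of_convexOn hΦ.convexOn hm
  have hconv : StrictConvexOn ℝ s (fun x ↦ Φ x - c * x) :=
    hΦ.sub_concaveOn ((LinearMap.mulLeft ℝ c).concaveOn hΦ.1)
  have hmin : IsMinOn (fun x ↦ Φ x - c * x) s m :=
    isMinOn_iff.2 fun x hx ↦ by linarith [hc x hx]
  refine ⟨c, fun x hx hxm ↦ (hc x hx).lt_of_ne fun heq ↦ hxm ?_⟩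
  have hmin' : IsMinOn (fun x ↦ Φ x - c * x) s x :=
    isMinOn_iff.2 fun y hy ↦ by linarith [hc y hy]
  exact hconv.eq_of_isMinOn hmin' hmin hx (interior_subset hm)

lemma mem_interior_of_convex_of_lt_of_lt (hs : Convex ℝ s) {a b : ℝ} (ha : a ∈ s) (hb : b ∈ s)
    (ham : a < m) (hmb : m < b) : m ∈ interior s :=
  mem_interior_iff_mem_nhds.2 <|
    Filter.mem_of_superset (Icc_mem_nhds ham hmb) (hs.ordConnected.out ha hb)

/-- The supporting line is vertical, `α = 0`, when `m` is not an interior point of `s`. -/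
lemma exists_mul_sub_mul_pos_of_strictConvexOn (hΦ : StrictConvexOn ℝ s Φ) (m : ℝ) :
    ∃ α c : ℝ, ∀ x ∈ s, x ≠ m → 0 < α * (Φ x - Φ m) - c * (x - m) := by
  by_cases hm : m ∈ interior s
  · obtain ⟨c, hc⟩ := exists_mul_sub_lt_of_strictConvexOn hΦ hm
    exact ⟨1, c, fun x hx hxm ↦ by linarith [hc x hx hxm]⟩
  · by_cases hlower : ∃ a ∈ s, a < m
    · obtain ⟨a, ha, ham⟩ := hlower
      refine ⟨0, 1, fun x hx hxm ↦ ?_⟩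
      have hle : x ≤ m := not_lt.1 fun hmx ↦
        hm (mem_interior_of_convex_of_lt_of_lt hΦ.1 ha hx ham hmx)
      linarith [hle.lt_of_ne hxm]
    · push Not at hlower
      exact ⟨0, -1, fun x hx hxm ↦ by linarith [(hlower x hx).lt_of_ne' hxm]⟩

end Convex

lemma exists_le_add_mul_of_isCompact {X : Type*} [TopologicalSpace X] {K : Set X}
    (hK : IsCompact K) {f g : X → ℝ} (hf : ContinuousOn f K) (hg : ContinuousOn g K)
    (hg_nonneg : ∀ x ∈ K, 0 ≤ g x) (hfg : ∀ x ∈ K, g x = 0 → f x ≤ 0) {ε : ℝ} (hε : 0 < ε) :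
    ∃ C : ℝ, ∀ x ∈ K, f x ≤ ε + C * g x := by
  have hg_pos : ∀ x ∈ K ∩ f ⁻¹' Set.Ici ε, 0 < g x := fun x ⟨hx, hεf⟩ ↦
    (hg_nonneg x hx).lt_of_ne' fun hgx ↦ (hfg x hx hgx).not_gt (hε.trans_le hεf)
  have hcompact : IsCompact (K ∩ f ⁻¹' Set.Ici ε) :=
    hf.upperSemicontinuousOn.isCompact_inter_preimage_Ici hK ε
  have hratio : ContinuousOn (fun x ↦ f x / g x) (K ∩ f ⁻¹' Set.Ici ε) :=
    (hf.mono Set.inter_subset_left).div (hg.mono Set.inter_subset_left) fun x hx ↦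
      (hg_pos x hx).ne'
  obtain ⟨C, hC⟩ := hcompact.bddAbove_image hratio
  refine ⟨max C 0, fun x hx ↦ ?_⟩
  rcases le_total ε (f x) with hεf | hfε
  · have hx' : x ∈ K ∩ f ⁻¹' Set.Ici ε := ⟨hx, hεf⟩
    calc f x ≤ C * g x := (div_le_iff₀ (hg_pos x hx')).1 (hC (Set.mem_image_of_mem _ hx'))
      _ ≤ max C 0 * g x := mul_le_mul_of_nonneg_right (le_max_left C 0) (hg_nonneg x hx)
      _ ≤ ε + max C 0 * g x := le_add_of_nonneg_left hε.le
  · exact le_add_of_le_of_nonneg hfε (mul_nonneg (le_max_right C 0) (hg_nonneg x hx))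

section PositiveFunctional

variable {A : Type*} [TopologicalSpace A] [Ring A] [StarRing A] [PartialOrder A]
  [StarOrderedRing A] [Algebra ℝ A] [ContinuousFunctionalCalculus ℝ A IsSelfAdjoint]
  {a : A} (φ : A →ₚ[ℝ] ℝ)

lemma map_cfc_eq_zero_of_map_cfc_eq_zero (ha : IsSelfAdjoint a) {f g : ℝ → ℝ}
    (hf : ContinuousOn f (spectrum ℝ a)) (hg : ContinuousOn g (spectrum ℝ a))
    (hf_nonneg : ∀ x ∈ spectrum ℝ a, 0 ≤ f x) (hg_nonneg : ∀ x ∈ spectrum ℝ a, 0 ≤ g x)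
    (hfg : ∀ x ∈ spectrum ℝ a, g x = 0 → f x = 0) (hφg : φ (cfc g a) = 0) :
    φ (cfc f a) = 0 := by
  have hbound : ∀ ε > 0, φ (cfc f a) ≤ ε * φ 1 := fun ε hε ↦ by
    obtain ⟨C, hC⟩ := exists_le_add_mul_of_isCompact
      (ContinuousFunctionalCalculus.isCompact_spectrum a) hf hg hg_nonneg
      (fun x hx hgx ↦ (hfg x hx hgx).le) hε
    calc φ (cfc f a) ≤ φ (cfc (fun x ↦ ε + C * g x) a) := OrderHomClass.mono φ (cfc_mono hC)
      _ = φ (ε • 1 + C • cfc g a) := by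
        rw [cfc_const_add ε _ a, cfc_const_mul C g a, Algebra.algebraMap_eq_smul_one]
      _ = ε * φ 1 := by simp [hφg]
  have htendsto : Filter.Tendsto (· * φ 1) (nhdsWithin 0 (Set.Ioi (0 : ℝ))) (nhds 0) :=
    ((continuous_mul_const (φ 1)).tendsto' 0 0 (zero_mul _)).mono_left nhdsWithin_le_nhds
  exact le_antisymm (ge_of_tendsto htendsto (eventually_nhdsWithin_of_forall hbound))
    (map_nonneg φ (cfc_nonneg hf_nonneg))

theorem map_sq_sub_eq_zero_of_jensen_eq (ha : IsSelfAdjoint a) (hφ : φ 1 = 1) {s : Set ℝ}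
    {Φ : ℝ → ℝ} (hs : spectrum ℝ a ⊆ s) (hΦ : StrictConvexOn ℝ s Φ)
    (hcont : ContinuousOn Φ (spectrum ℝ a)) (heq : Φ (φ a) = φ (cfc Φ a)) :
    φ ((a - algebraMap ℝ A (φ a)) ^ 2) = 0 := by
  obtain ⟨α, c, hpos⟩ := exists_mul_sub_mul_pos_of_strictConvexOn hΦ (φ a)
  set m := φ a with hm
  set g : ℝ → ℝ := fun x ↦ α * (Φ x - Φ m) - c * (x - m) with hg
  have hgm : g m = 0 := by simp [hg]
  have hg_cfc : cfc g a = α • (cfc Φ a - Φ m • 1) - c • (a - m • 1) := by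
    rw [hg, cfc_sub _ _ a, cfc_const_mul α _ a, cfc_const_mul c _ a, cfc_sub _ _ a,
      cfc_sub _ _ a, cfc_id' ℝ a, cfc_const _ a, cfc_const _ a, Algebra.algebraMap_eq_smul_one,
      Algebra.algebraMap_eq_smul_one]
  have hsq_cfc : cfc (fun x : ℝ ↦ (x - m) ^ 2) a = (a - algebraMap ℝ A m) ^ 2 := by
    rw [cfc_pow _ 2 a, cfc_sub _ _ a, cfc_id' ℝ a, cfc_const m a]
  rw [← hsq_cfc]
  refine map_cfc_eq_zero_of_map_cfc_eq_zero φ ha (g := g) (by fun_prop) (by fun_prop)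
    (fun x _ ↦ sq_nonneg _) (fun x hx ↦ ?_) (fun x hx hgx ↦ ?_) ?_
  · rcases eq_or_ne x m with rfl | hxm
    · exact hgm.ge
    · exact (hpos x (hs hx) hxm).le
  · have hxm : x = m := by_contra fun hxm ↦ (hpos x (hs hx) hxm).ne' hgx
    simp [hxm]
  · simp [hg_cfc, hφ, ← heq, ← hm]

end PositiveFunctional

section Hilbert

variable {H : Type*} [NormedAddCommGroup H] [InnerProductSpace ℂ H]

/-- The positive functional `A ↦ Re ⟨ψ, Aψ⟩` on bounded operators, the expectation of `A` in the
vector state given by a unit vector `ψ`. It is taken to be real-valued and real-linear because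
only self-adjoint operators are evaluated. -/
noncomputable def vectorFunctional (ψ : H) : (H →L[ℂ] H) →ₚ[ℝ] ℝ where
  toFun A := (inner ℂ ψ (A ψ)).re
  map_add' A B := by simp
  map_smul' r A := by simp
  monotone' A B hAB := by
    simpa [inner_sub_right] using ((ContinuousLinearMap.le_def A B).1 hAB).re_inner_nonneg_right ψ

lemma vectorFunctional_apply (ψ : H) (A : H →L[ℂ] H) :
    vectorFunctional ψ A = (inner ℂ ψ (A ψ)).re :=
  rfl

lemma vectorFunctional_one {ψ : H} (hψ : ‖ψ‖ = 1) : vectorFunctional ψ 1 = 1 := by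
  simp [vectorFunctional_apply, inner_self_eq_norm_sq_to_K, hψ]

lemma vectorFunctional_sq [CompleteSpace H] {S : H →L[ℂ] H} (hS : IsSelfAdjoint S) (ψ : H) :
    vectorFunctional ψ (S ^ 2) = ‖S ψ‖ ^ 2 := by
  have hsymm : inner ℂ ψ (S (S ψ)) = inner ℂ (S ψ) (S ψ) := (hS.isSymmetric ψ (S ψ)).symm
  rw [vectorFunctional_apply, pow_two, mul_apply_eq_comp, hsymm]
  exact inner_self_eq_norm_sq (𝕜 := ℂ) (S ψ)

theorem stmt_13_general [CompleteSpace H] {T : H →L[ℂ] H} (hT : IsSelfAdjoint T)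
    {ψ : H} (hψ : ‖ψ‖ = 1) {s : Set ℝ} (hs : spectrum ℝ T ⊆ s)
    {Φ : ℝ → ℝ} (hconv : StrictConvexOn ℝ s Φ) (hcont : ContinuousOn Φ (spectrum ℝ T))
    (heq : Φ (inner ℂ ψ (T ψ)).re = (inner ℂ ψ (cfc Φ T ψ)).re) :
    T ψ = ((inner ℂ ψ (T ψ)).re : ℂ) • ψ := by
  set m := (inner ℂ ψ (T ψ)).re
  have hS : IsSelfAdjoint (T - algebraMap ℝ (H →L[ℂ] H) m) :=
    hT.sub (.algebraMap _ (.all m))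
  have hzero : ‖(T - algebraMap ℝ (H →L[ℂ] H) m) ψ‖ ^ 2 = 0 := by
    rw [← vectorFunctional_sq hS]
    exact map_sq_sub_eq_zero_of_jensen_eq (vectorFunctional ψ) hT (vectorFunctional_one hψ)
      hs hconv hcont heq
  simpa [sub_eq_zero, Algebra.algebraMap_eq_smul_one] using hzero

end Hilbert

/-- strict Jensen equality forces eigenstates: if `T` is a bounded
self-adjoint operator on a complex Hilbert space, `ψ` a unit vector and `Φ : ℝ → ℝ`
strictly convex and continuous, then equality `Φ(⟨ψ, Tψ⟩) = ⟨ψ, Φ(T)ψ⟩` (with `Φ(T)`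
the continuous functional calculus) implies that `ψ` is an eigenvector of `T` with
eigenvalue `⟨ψ, Tψ⟩`. -/
theorem stmt_13 {H : Type*} [NormedAddCommGroup H] [InnerProductSpace ℂ H]
    [CompleteSpace H] (T : H →L[ℂ] H) (hT : IsSelfAdjoint T)
    (ψ : H) (hψ : ‖ψ‖ = 1)
    (Φ : ℝ → ℝ) (hconv : StrictConvexOn ℝ Set.univ Φ) (hcont : Continuous Φ)
    (heq : Φ ((inner ℂ ψ (T ψ) : ℂ).re) = (inner ℂ ψ ((cfc Φ T) ψ) : ℂ).re) :
    T ψ = (((inner ℂ ψ (T ψ) : ℂ).re : ℂ)) • ψ :=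
  stmt_13_general hT hψ (Set.subset_univ _) hconv hcont.continuousOn heq
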